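/- Let occ(σ) be the number of occurrences in σ of the mesh pattern Nr. 28, where an occurrence is a pair of indices i < j with a = σ_i < σ_j = b such that: every element before position i has value greater than b; every element strictly between positions i and j has value strictly between a and b; and every element after position j has value less than a. Let E(t,u) = Σ_{n≥0} t^n Σ_{σ∈K_n} u^{occ(σ)}. Then ((1+t)^2 + t^2(1−u)·A(t)·(A(t)−1−t))·E(t,u) = (1+t)^2·A(t) as formal power series in t over ℚ[u]. -/

import Mathlib

/-- A permutation of `{0, …, n-1}` is a *king permutation* if consecutive entries
differ by more than 1 in absolute value. -/
def IsKing {n : ℕ} (σ : Equiv.Perm (Fin n)) : Prop :=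
  ∀ i : Fin n, ∀ h : (i : ℕ) + 1 < n,
    1 < |((σ ⟨(i : ℕ) + 1, h⟩ : ℕ) : ℤ) - ((σ i : ℕ) : ℤ)|

/-- `kingCount n = A_n`, the number of king permutations of length `n`. -/
noncomputable def kingCount (n : ℕ) : ℕ :=
  Nat.card {σ : Equiv.Perm (Fin n) // IsKing σ}

/-- `A(t)` regarded as a power series over `ℚ[u]` (constant-polynomial coefficients). -/
noncomputable def kingAu : PowerSeries (Polynomial ℚ) :=
  PowerSeries.mk fun n => (kingCount n : Polynomial ℚ)

/-- `u` viewed as a constant power series over `ℚ[u]`. -/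
noncomputable def U : PowerSeries (Polynomial ℚ) :=
  PowerSeries.C (R := Polynomial ℚ) Polynomial.X

/-- `t`, the power series variable. -/
noncomputable def T : PowerSeries (Polynomial ℚ) :=
  PowerSeries.X

/-- An occurrence of the mesh pattern Nr. 28 in `σ`. -/
def OccP {n : ℕ} (σ : Equiv.Perm (Fin n)) (i j : Fin n) : Prop :=
  i < j ∧ σ i < σ j ∧
    (∀ k : Fin n, k < i → σ j < σ k) ∧
    (∀ k : Fin n, i < k → k < j → σ i < σ k ∧ σ k < σ j) ∧
    (∀ k : Fin n, j < k → σ k < σ i)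

/-- The number of occurrences of the mesh pattern Nr. 28 in `σ`. -/
noncomputable def occP {n : ℕ} (σ : Equiv.Perm (Fin n)) : ℕ :=
  Nat.card {p : Fin n × Fin n // OccP σ p.1 p.2}

-- `E(t,u) = Σ_{n≥0} t^n Σ_{σ∈K_n} u^{occ(σ)}`, a power series in `t` over `ℚ[u]`.
open Classical in
noncomputable def Etu : PowerSeries (Polynomial ℚ) :=
  PowerSeries.mk fun n =>
    ∑ σ : Equiv.Perm (Fin n),
      if IsKing σ then (Polynomial.X : Polynomial ℚ) ^ occP σ else 0

open Finset in
theorem pow_card_aux {R : Type*} [CommRing R] (X : R) (S : Finset ℕ) :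
    X ^ S.card = 1 + (X - 1) * ∑ b ∈ S, X ^ (S.filter (· < b)).card := by
  induction S using Finset.induction_on_max with
  | empty => simp
  | insert a s h ih =>
    have ha : a ∉ s := fun h' => lt_irrefl _ (h a h')
    rw [Finset.sum_insert ha, Finset.card_insert_of_notMem ha]
    have h1 : (insert a s).filter (· < a) = s := by
      ext x; simp only [mem_filter, mem_insert]; constructor
      · rintro ⟨rfl | h2, h3⟩
        · omega
        · exact h2
      · intro hx; exact ⟨Or.inr hx, h x hx⟩
    have h2 : ∑ b ∈ s, X ^ ((insert a s).filter (· < b)).card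
        = ∑ b ∈ s, X ^ (s.filter (· < b)).card := by
      apply Finset.sum_congr rfl
      intro b hb
      rw [Finset.filter_insert, if_neg (by have := h b hb; omega)]
    rw [h1, h2, mul_add, pow_succ]
    linear_combination ih

def IsP (l : List ℕ) : Prop := l.Nodup ∧ ∀ x ∈ l, x < l.length

def Kg (l : List ℕ) : Prop := l.IsChain (fun a b => a + 1 < b ∨ b + 1 < a)

open Classical in
noncomputable def KL (n : ℕ) : Finset (List ℕ) :=
  (List.range n).permutations.toFinset.filter Kg

theorem IsP.perm {l : List ℕ} (h : IsP l) : l.Perm (List.range l.length) := by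
  apply List.perm_of_nodup_nodup_toFinset_eq h.1 List.nodup_range
  apply Finset.eq_of_subset_of_card_le
  · intro x hx
    simpa using h.2 x (by simpa using hx)
  · rw [List.toFinset_card_of_nodup h.1, List.toFinset_card_of_nodup List.nodup_range]
    simp

theorem IsP.mem {l : List ℕ} (h : IsP l) {x : ℕ} : x ∈ l ↔ x < l.length := by
  rw [h.perm.mem_iff]; simp

theorem mem_KL {n : ℕ} {l : List ℕ} : l ∈ KL n ↔ l.length = n ∧ IsP l ∧ Kg l := by
  simp only [KL, Finset.mem_filter, List.mem_toFinset, List.mem_permutations]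
  constructor
  · rintro ⟨h1, h2⟩
    have hl : l.length = n := by simpa using h1.length_eq
    refine ⟨hl, ⟨h1.nodup_iff.2 List.nodup_range, fun x hx => ?_⟩, h2⟩
    rw [h1.mem_iff] at hx; simpa [hl] using hx
  · rintro ⟨rfl, h1, h2⟩
    exact ⟨h1.perm, h2⟩


def sk (x z : List ℕ) : List ℕ := x.map (· + z.length) ++ z

@[simp] theorem sk_length (x z : List ℕ) : (sk x z).length = x.length + z.length := by simp [sk]

theorem sk_assoc (x y z : List ℕ) : sk (sk x y) z = sk x (sk y z) := by
  simp [sk, Function.comp_def, add_assoc]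

theorem IsP_sk {x z : List ℕ} (hx : IsP x) (hz : IsP z) : IsP (sk x z) := by
  constructor
  · unfold sk
    rw [List.nodup_append]
    refine ⟨hx.1.map (fun a b h => by simpa using h), hz.1, ?_⟩
    intro a ha b hb
    simp only [List.mem_map] at ha
    obtain ⟨c, hc, rfl⟩ := ha
    have := hz.2 b hb
    omega
  · intro a ha
    rw [sk_length]
    simp only [sk, List.mem_append, List.mem_map] at ha
    rcases ha with ⟨c, hc, rfl⟩ | ha
    · have := hx.2 c hc; omega
    · have := hz.2 a ha; omega

theorem down_IsP {z : List ℕ} (h : z.Nodup) (hd : ∀ w ∈ z, ∀ v < w, v ∈ z) : IsP z := by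
  refine ⟨h, fun x hx => ?_⟩
  have : Finset.range (x+1) ⊆ z.toFinset := by
    intro v hv
    simp only [Finset.mem_range] at hv
    simp only [List.mem_toFinset]
    rcases Nat.lt_or_ge v x with h | h
    · exact hd x hx v h
    · have : v = x := by omega
      exact this ▸ hx
  have := Finset.card_le_card this
  rw [List.toFinset_card_of_nodup h] at this
  simp at this; omega

theorem IsP_split {x z : List ℕ} (h : IsP (x ++ z)) (hxz : ∀ u ∈ x, ∀ v ∈ z, v < u) :
    IsP z ∧ ∃ x', IsP x' ∧ x ++ z = sk x' z := by
  have hnd := List.nodup_append.1 h.1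
  have hz : IsP z := by
    apply down_IsP hnd.2.1
    intro w hw v hv
    have h1 : w < (x ++ z).length := h.2 w (by simp [hw])
    have h2 : v ∈ x ++ z := h.mem.2 (by omega)
    rcases List.mem_append.1 h2 with h3 | h3
    · have := hxz v h3 w hw; omega
    · exact h3
  have hge : ∀ u ∈ x, z.length ≤ u := by
    intro u hu
    by_contra hc
    exact hnd.2.2 u hu u (hz.mem.2 (by omega)) rfl
  refine ⟨hz, x.map (· - z.length), ⟨?_, ?_⟩, ?_⟩
  · apply List.Nodup.map_on _ hnd.1
    intro a ha b hb hab
    have := hge a ha; have := hge b hb; omega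
  · intro a ha
    obtain ⟨c, hc, rfl⟩ := List.mem_map.1 ha
    have := hge c hc
    have := h.2 c (by simp [hc])
    simp at *; omega
  · simp only [sk, List.map_map]
    congr 1
    symm
    calc _ = List.map id x := List.map_congr_left (by
          intro a ha; have := hge a ha; simp; omega)
      _ = x := by simp

theorem sk_inj {x z x' z' : List ℕ} (h : sk x z = sk x' z') (hl : z.length = z'.length) :
    x = x' ∧ z = z' := by
  unfold sk at h
  obtain ⟨h1, h2⟩ := List.append_inj' h hl
  refine ⟨?_, h2⟩
  rw [hl] at h1
  exact List.map_injective_iff.2 (fun a b h => by simpa using h) h1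

theorem Kg_map (c : ℕ) (x : List ℕ) : Kg (x.map (· + c)) ↔ Kg x := by
  unfold Kg
  rw [List.isChain_map]
  constructor <;> exact fun h => h.imp (by intro a b hab; omega)

def Occ (l : List ℕ) (b : ℕ) : Prop :=
  ∃ x c y d z, l = x ++ (c :: (y ++ d :: z)) ∧ c < d ∧ (∀ u ∈ x, d < u) ∧
    (∀ v ∈ y, c < v ∧ v < d) ∧ (∀ w ∈ z, w < c) ∧ z.length = b

open Classical in
noncomputable def occS (l : List ℕ) : Finset ℕ := (Finset.range l.length).filter (Occ l)

theorem mem_occS {l : List ℕ} {b : ℕ} : b ∈ occS l ↔ Occ l b := by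
  simp only [occS, Finset.mem_filter, Finset.mem_range, and_iff_right_iff_imp]
  rintro ⟨x, c, y, d, z, rfl, -, -, -, -, rfl⟩
  simp; omega

theorem Occ_append {x0 β : List ℕ} (h : ∀ u ∈ x0, ∀ v ∈ β, v < u) {b : ℕ} (hb : b < β.length) :
    Occ (x0 ++ β) b ↔ Occ β b := by
  constructor
  · rintro ⟨x, c, y, d, z, he, h1, h2, h3, h4, h5⟩
    rcases List.append_eq_append_iff.1 he with ⟨w, hw1, hw2⟩ | ⟨w, hw1, hw2⟩
    · subst hw1
      exact ⟨w, c, y, d, z, hw2, h1, fun u hu => h2 u (by simp [hu]), h3, h4, h5⟩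
    · cases w with
      | nil =>
        exact ⟨[], c, y, d, z, by simpa using hw2.symm, h1, by simp, h3, h4, h5⟩
      | cons e w =>
        exfalso
        simp only [List.cons_append, List.cons.injEq] at hw2
        obtain ⟨rfl, hw2⟩ := hw2
        have hc : c ∈ x0 := by simp [hw1]
        have hd : d ∈ β := by
          rcases List.append_eq_append_iff.1 hw2 with ⟨q, hq1, hq2⟩ | ⟨q, hq1, hq2⟩
          · cases q with
            | nil => simp at hq2; simp [← hq2]
            | cons e q =>
              have := congrArg List.length hq2
              simp at this; omega
          · simp [hq2]
        have := h c hc d hd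
        omega
  · rintro ⟨x, c, y, d, z, rfl, h1, h2, h3, h4, h5⟩
    refine ⟨x0 ++ x, c, y, d, z, by simp, h1, ?_, h3, h4, h5⟩
    intro u hu
    rcases List.mem_append.1 hu with hu | hu
    · exact h u hu d (by simp)
    · exact h2 u hu

open Classical in
noncomputable def ML (n : ℕ) : Finset (List ℕ) :=
  (KL n).filter (fun l => ∃ y, l = 0 :: (y ++ [n - 1]))

theorem mem_ML {n : ℕ} {l : List ℕ} :
    l ∈ ML n ↔ l ∈ KL n ∧ ∃ y, l = 0 :: (y ++ [n - 1]) := by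
  simp [ML]
theorem Kg_sk3 {α μ β : List ℕ} (hβ : IsP β) (hμ : ∃ y, μ = 0 :: (y ++ [μ.length - 1])) :
    Kg (sk α (sk μ β)) ↔ Kg α ∧ Kg μ ∧ Kg β := by
  obtain ⟨y, hy⟩ := hμ
  have hlen : 2 ≤ μ.length := by rw [hy]; simp
  generalize hm : μ.length = m at *
  have key1 : ∀ u ∈ (α.map (· + (sk μ β).length)).getLast?, ∀ v ∈ (sk μ β).head?,
      u + 1 < v ∨ v + 1 < u := by
    intro u hu v hv
    have hu' := List.mem_of_getLast? hu
    simp only [List.mem_map, sk_length] at hu'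
    obtain ⟨w, -, rfl⟩ := hu'
    have : v = β.length := by
      simp [sk, hy] at hv; exact hv.symm
    omega
  have key2 : ∀ u ∈ (μ.map (· + β.length)).getLast?, ∀ v ∈ β.head?,
      u + 1 < v ∨ v + 1 < u := by
    intro u hu v hv
    have hv' := hβ.2 v (List.mem_of_head? hv)
    have : u = m - 1 + β.length := by
      rw [hy] at hu
      simp [List.getLast?_cons] at hu
      exact hu.symm
    omega
  have e1 : Kg (sk μ β) ↔ Kg μ ∧ Kg β := by
    rw [← Kg_map β.length μ]
    unfold Kg
    conv_lhs => unfold sk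
    rw [List.isChain_append]
    exact ⟨fun h => ⟨h.1, h.2.1⟩, fun h => ⟨h.1, h.2, key2⟩⟩
  rw [← e1, ← Kg_map (sk μ β).length α]
  unfold Kg
  conv_lhs => unfold sk
  rw [List.isChain_append]
  exact ⟨fun h => ⟨h.1, h.2.1⟩, fun h => ⟨h.1, h.2, key1⟩⟩

theorem sk_gt {x z : List ℕ} (hz : IsP z) : ∀ u ∈ x.map (· + z.length), ∀ v ∈ z, v < u := by
  intro u hu v hv
  obtain ⟨w, -, rfl⟩ := List.mem_map.1 hu
  have := hz.2 v hv
  omega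

theorem Occ_sk_low {x z : List ℕ} (hz : IsP z) {b : ℕ} (hb : b < z.length) :
    Occ (sk x z) b ↔ Occ z b := Occ_append (sk_gt hz) hb

theorem occS_sk {x z : List ℕ} (hz : IsP z) :
    (occS (sk x z)).filter (· < z.length) = occS z := by
  ext b
  rw [Finset.mem_filter, mem_occS, mem_occS]
  constructor
  · rintro ⟨h1, h2⟩; exact (Occ_sk_low hz h2).1 h1
  · intro h
    have hb : b < z.length := by
      have := mem_occS.2 h
      simp [occS] at this; exact this.1
    exact ⟨(Occ_sk_low hz hb).2 h, hb⟩

theorem Occ_sk3 {α μ β : List ℕ} (hμP : IsP μ) (hβ : IsP β)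
    (hμ : ∃ y, μ = 0 :: (y ++ [μ.length - 1])) :
    Occ (sk α (sk μ β)) β.length := by
  obtain ⟨y, hy⟩ := hμ
  have hlen : 2 ≤ μ.length := by rw [hy]; simp
  generalize hm : μ.length = m at *
  refine ⟨α.map (· + (sk μ β).length), 0 + β.length, y.map (· + β.length), m - 1 + β.length, β,
    ?_, ?_, ?_, ?_, ?_, rfl⟩
  · conv_lhs => unfold sk
    congr 1
    simp [sk, hy]
  · omega
  · intro u hu
    obtain ⟨w, -, rfl⟩ := List.mem_map.1 hu
    simp; omega
  · intro v hv
    obtain ⟨w, hw, rfl⟩ := List.mem_map.1 hv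
    have hnd := hμP.1
    have hw' := hμP.2 w (by rw [hy]; simp [hw])
    have h0 : w ≠ 0 := by
      rintro rfl; rw [hy] at hnd; simp [hw] at hnd
    have h1 : w ≠ m - 1 := by
      rintro rfl; rw [hy] at hnd; simp [List.nodup_append] at hnd
      exact hnd.2.2 _ hw rfl
    omega
  · intro w hw; have := hβ.2 w hw; omega

theorem Occ_decomp {l : List ℕ} (hl : IsP l) {b : ℕ} (h : Occ l b) :
    ∃ α μ β, IsP α ∧ IsP μ ∧ IsP β ∧ (∃ y, μ = 0 :: (y ++ [μ.length - 1])) ∧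
      l = sk α (sk μ β) ∧ β.length = b := by
  obtain ⟨x, c, y, d, z, rfl, h1, h2, h3, h4, rfl⟩ := h
  obtain ⟨hP1, α, hα, e1⟩ := IsP_split hl (by
    intro u hu v hv
    have := h2 u hu
    simp only [List.mem_cons, List.mem_append] at hv
    rcases hv with rfl | hv | rfl | hv
    · omega
    · have := h3 v hv; omega
    · omega
    · have := h4 v hv; omega)
  have e2 : c :: (y ++ d :: z) = (c :: (y ++ [d])) ++ z := by simp
  rw [e2] at hP1
  obtain ⟨hz, μ, hμ, e3⟩ := IsP_split hP1 (by
    intro u hu v hv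
    have := h4 v hv
    simp only [List.mem_cons, List.mem_append, List.not_mem_nil, or_false] at hu
    rcases hu with rfl | hu | rfl
    · omega
    · have := h3 u hu; omega
    · omega)
  refine ⟨α, μ, z, hα, hμ, hz, ?_, by rw [e1, e2, e3], rfl⟩
  have e4 : c :: (y ++ [d]) = μ.map (· + z.length) := by
    unfold sk at e3
    exact List.append_cancel_right e3
  obtain ⟨c', μ', rfl, rfl, e5⟩ := List.map_eq_cons_iff.1 e4.symm
  obtain ⟨y', q, rfl, rfl, e6⟩ := List.map_eq_append_iff.1 e5
  obtain ⟨d', q', rfl, rfl, e7⟩ := List.map_eq_cons_iff.1 e6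
  obtain rfl := List.map_eq_nil_iff.1 e7
  have hy' : ∀ v ∈ y', c' < v ∧ v < d' := by
    intro v hv
    have := h3 (v + z.length) (List.mem_map.2 ⟨v, hv, rfl⟩)
    omega
  have h0 : 0 ∈ c' :: (y' ++ [d']) := hμ.mem.2 (by simp)
  have hm : (c' :: (y' ++ [d'])).length - 1 ∈ c' :: (y' ++ [d']) := hμ.mem.2 (by simp)
  have hd := hμ.2 d' (by simp)
  generalize (c' :: (y' ++ [d'])).length = m at *
  have hc0 : c' = 0 := by
    simp only [List.mem_cons, List.mem_append, List.not_mem_nil, or_false] at h0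
    rcases h0 with h | h | h
    · omega
    · have := hy' _ h; omega
    · omega
  have hdm : d' = m - 1 := by
    simp only [List.mem_cons, List.mem_append, List.not_mem_nil, or_false] at hm
    rcases hm with h | h | h
    · omega
    · have := hy' _ h; omega
    · omega
  exact ⟨y', by rw [hc0, hdm]⟩

theorem mid_len {α μ α' μ' : List ℕ} (h : sk α μ = sk α' μ') (hμ : μ ≠ [])
    (hμ' : ∃ y, μ' = 0 :: (y ++ [μ'.length - 1])) : ¬ μ.length < μ'.length := by
  intro hlt
  obtain ⟨y, hy⟩ := hμ'
  have hpos : 0 < μ.length := List.length_pos_iff.2 hμ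
  unfold sk at h
  rcases List.append_eq_append_iff.1 h with ⟨w, hw1, hw2⟩ | ⟨w, hw1, hw2⟩
  · rw [hw2] at hlt; simp at hlt
  · cases w with
    | nil => rw [hw2] at hlt; simp at hlt
    | cons e w =>
      have he : e = 0 := by
        rw [hy, List.cons_append, List.cons.injEq] at hw2
        exact hw2.1.symm
      have : e ∈ α.map (· + μ.length) := by rw [hw1]; simp
      obtain ⟨v, -, hv⟩ := List.mem_map.1 this
      omega

open Finset in
theorem main_sum (X : Polynomial ℚ) (n : ℕ) :
    ∑ l ∈ KL n, ∑ b ∈ occS l, X ^ ((occS l).filter (· < b)).card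
      = ∑ p ∈ antidiagonal n, ((KL p.1).card : Polynomial ℚ) *
          ∑ q ∈ antidiagonal p.2, ((ML q.1).card : Polynomial ℚ) *
            ∑ β ∈ KL q.2, X ^ (occS β).card := by
  have hR : ∑ p ∈ antidiagonal n, ((KL p.1).card : Polynomial ℚ) *
          ∑ q ∈ antidiagonal p.2, ((ML q.1).card : Polynomial ℚ) *
            ∑ β ∈ KL q.2, X ^ (occS β).card
      = ∑ s ∈ (antidiagonal n).sigma (fun p => KL p.1 ×ˢ
          (antidiagonal p.2).sigma (fun q => ML q.1 ×ˢ KL q.2)),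
          X ^ (occS s.2.2.2.2).card := by
    rw [sum_sigma]
    apply sum_congr rfl
    intro p _
    rw [sum_product]
    dsimp only
    rw [sum_const, nsmul_eq_mul]
    congr 1
    rw [sum_sigma]
    apply sum_congr rfl
    intro q _
    rw [sum_product]
    dsimp only
    rw [sum_const, nsmul_eq_mul]
  rw [hR, ← sum_sigma (KL n) occS (fun s => X ^ ((occS s.1).filter (· < s.2)).card)]
  symm
  refine sum_bij (fun s _ => (⟨sk s.2.1 (sk s.2.2.2.1 s.2.2.2.2), s.2.2.1.2⟩ :
    (_ : List ℕ) × ℕ)) ?_ ?_ ?_ ?_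
  · rintro ⟨⟨a, k⟩, α, ⟨m, b⟩, μ, β⟩ hs
    simp only [mem_sigma, HasAntidiagonal.mem_antidiagonal, mem_product, mem_ML, mem_KL] at hs ⊢
    obtain ⟨h1, ⟨rfl, hα, kα⟩, h2, ⟨⟨rfl, hμ, kμ⟩, hμ'⟩, ⟨rfl, hβ, kβ⟩⟩ := hs
    refine ⟨⟨by simp; omega, IsP_sk hα (IsP_sk hμ hβ), (Kg_sk3 hβ hμ').2 ⟨kα, kμ, kβ⟩⟩, ?_⟩
    rw [mem_occS]
    exact Occ_sk3 hμ hβ hμ'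
  · rintro ⟨⟨a, k⟩, α, ⟨m, b⟩, μ, β⟩ hs ⟨⟨a', k'⟩, α', ⟨m', b'⟩, μ', β'⟩ hs' he
    simp only [mem_sigma, HasAntidiagonal.mem_antidiagonal, mem_product, mem_ML, mem_KL] at hs hs'
    obtain ⟨h1, ⟨rfl, hα, kα⟩, h2, ⟨⟨rfl, hμ, kμ⟩, hμ'⟩, ⟨rfl, hβ, kβ⟩⟩ := hs
    obtain ⟨h1', ⟨rfl, hα', kα'⟩, h2', ⟨⟨rfl, hμ1, kμ'⟩, hμ1'⟩, ⟨rfl, hβ', kβ'⟩⟩ := hs'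
    simp only [Sigma.mk.injEq, heq_eq_eq] at he
    obtain ⟨he, hb⟩ := he
    have hq : sk (sk α μ) β = sk (sk α' μ') β' := by rw [sk_assoc, sk_assoc, he]
    obtain ⟨hq1, rfl⟩ := sk_inj hq hb
    have hμμ : μ.length = μ'.length := by
      have := mid_len hq1 (by rintro rfl; simp at hμ') hμ1'
      have := mid_len hq1.symm (by rintro rfl; simp at hμ1') hμ'
      omega
    obtain ⟨rfl, rfl⟩ := sk_inj hq1 hμμ
    subst h2 h2'
    rfl
  · rintro ⟨l, b⟩ hs
    simp only [mem_sigma, mem_KL, mem_occS] at hs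
    obtain ⟨⟨rfl, hl, kl⟩, ho⟩ := hs
    obtain ⟨α, μ, β, hα, hμ, hβ, hμ', rfl, rfl⟩ := Occ_decomp hl ho
    have hk := (Kg_sk3 hβ hμ').1 kl
    refine ⟨⟨(α.length, μ.length + β.length), α, ⟨(μ.length, β.length), μ, β⟩⟩, ?_, rfl⟩
    simp only [mem_sigma, HasAntidiagonal.mem_antidiagonal, mem_product, mem_ML, mem_KL]
    exact ⟨by simp, ⟨trivial, hα, hk.1⟩, trivial, ⟨⟨trivial, hμ, hk.2.1⟩, hμ'⟩, trivial, hβ, hk.2.2⟩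
  · rintro ⟨⟨a, k⟩, α, ⟨m, b⟩, μ, β⟩ hs
    simp only [mem_sigma, HasAntidiagonal.mem_antidiagonal, mem_product, mem_ML, mem_KL] at hs ⊢
    obtain ⟨h1, ⟨rfl, hα, kα⟩, h2, ⟨⟨rfl, hμ, kμ⟩, hμ'⟩, ⟨rfl, hβ, kβ⟩⟩ := hs
    rw [← sk_assoc, occS_sk hβ]
open Classical in
noncomputable def SL (n : ℕ) : Finset (List ℕ) := (KL n).filter (fun l => ∃ y, l = 0 :: y)

theorem mem_SL {n : ℕ} {l : List ℕ} : l ∈ SL n ↔ l ∈ KL n ∧ ∃ y, l = 0 :: y := by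
  simp [SL]

theorem cons_mem_KL {n : ℕ} {l : List ℕ} :
    (0 :: l.map (· + 1)) ∈ KL (n + 1) ↔ l ∈ KL n ∧ ¬ ∃ y, l = 0 :: y := by
  have h1 : Kg (0 :: l.map (· + 1)) ↔ Kg l ∧ ¬ ∃ y, l = 0 :: y := by
    rw [← Kg_map 1 l]
    unfold Kg
    rw [List.isChain_cons, and_comm]
    apply and_congr_right
    intro _
    cases l with
    | nil => simp
    | cons a l => simp; omega
  have h2 : IsP (0 :: l.map (· + 1)) ↔ IsP l := by
    unfold IsP
    rw [List.nodup_cons, List.nodup_map_iff (fun a b h => by simpa using h)]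
    simp
  rw [mem_KL, mem_KL, h1, h2]
  simp; tauto

theorem SL_succ (n : ℕ) : (SL (n + 1)).card + (SL n).card = (KL n).card := by
  classical
  have : (SL (n + 1)).card = ((KL n).filter (fun l => ¬ ∃ y, l = 0 :: y)).card := by
    symm
    apply Finset.card_bij (fun l _ => 0 :: l.map (· + 1))
    · intro l hl
      rw [mem_SL]
      exact ⟨cons_mem_KL.2 (by simpa using hl), _, rfl⟩
    · intro a _ b _ h
      simp only [List.cons.injEq, true_and] at h
      exact List.map_injective_iff.2 (fun a b h => by simpa using h) h
    · intro l hl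
      rw [mem_SL] at hl
      obtain ⟨h1, y, rfl⟩ := hl
      have e : (y.map (· - 1)).map (· + 1) = y := by
        have hnd := (mem_KL.1 h1).2.1.1
        rw [List.map_map]
        calc _ = List.map id y := List.map_congr_left (by
              intro a ha
              have : a ≠ 0 := by rintro rfl; simp [ha] at hnd
              simp; omega)
          _ = y := by simp
      refine ⟨y.map (· - 1), ?_, by rw [e]⟩
      rw [Finset.mem_filter]
      apply cons_mem_KL.1
      rw [e]; exact h1
  rw [this, add_comm, SL]
  exact Finset.card_filter_add_card_filter_not _

theorem SL_zero : (SL 0).card = 0 := by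
  rw [Finset.card_eq_zero, Finset.eq_empty_iff_forall_notMem]
  intro l hl
  rw [mem_SL, mem_KL] at hl
  obtain ⟨⟨h, -⟩, y, rfl⟩ := hl
  simp at h

theorem KL_zero : (KL 0).card = 1 := by
  rw [Finset.card_eq_one]
  refine ⟨[], ?_⟩
  ext l
  rw [mem_KL, Finset.mem_singleton]
  constructor
  · rintro ⟨h, -⟩; simpa using h
  · rintro rfl; simp [IsP, Kg]

theorem SL_one : (SL 1).card = 1 := by
  have := SL_succ 0
  rw [SL_zero, KL_zero] at this; simpa using this

theorem ML_small (n : ℕ) (hn : n ≤ 2) : (ML n).card = 0 := by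
  rw [Finset.card_eq_zero, Finset.eq_empty_iff_forall_notMem]
  intro l hl
  rw [mem_ML, mem_KL] at hl
  obtain ⟨⟨h, -, h3⟩, y, rfl⟩ := hl
  simp at h
  obtain rfl : y = [] := by
    rw [← List.length_eq_zero_iff]; omega
  simp at h
  subst h
  simp [Kg] at h3

theorem concat_mem_ML {n : ℕ} {y : List ℕ} :
    (0 :: (y ++ [n + 1])) ∈ ML (n + 2) ↔ (0 :: y) ∈ KL (n + 1) ∧ (0 :: y).getLast? ≠ some n := by
  rw [mem_ML]
  have hex : ∃ y', 0 :: (y ++ [n + 1]) = 0 :: (y' ++ [n + 2 - 1]) := ⟨y, rfl⟩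
  rw [and_iff_left hex, mem_KL, mem_KL]
  rw [← List.cons_append]
  generalize 0 :: y = l
  by_cases hl : l.length = n + 1
  swap
  · simp [hl]
  have h2 : IsP (l ++ [n + 1]) ↔ IsP l := by
    unfold IsP
    simp only [List.nodup_append, List.length_append, List.mem_append, List.mem_singleton, hl,
      List.length_singleton]
    constructor
    · rintro ⟨⟨h1, -, h2⟩, h3⟩
      refine ⟨h1, fun x hx => ?_⟩
      have := h3 x (Or.inl hx)
      have := h2 x hx _ rfl
      omega
    · rintro ⟨h1, h2⟩
      refine ⟨⟨h1, by simp, ?_⟩, ?_⟩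
      · rintro a ha b rfl
        have := h2 a ha; omega
      · rintro x (hx | rfl)
        · have := h2 x hx; omega
        · omega
  rw [h2]
  simp only [List.length_append, hl, List.length_singleton, true_and]
  rw [and_assoc]
  apply and_congr_right
  intro hP
  unfold Kg
  rw [List.isChain_append]
  apply and_congr_right
  intro _
  simp only [List.isChain_singleton, true_and, List.head?_cons, Option.mem_def,
    Option.some.injEq, forall_eq']
  constructor
  · intro h hc
    have := h n hc; omega
  · intro h x hx
    have h4 := hP.2 x (List.mem_of_getLast? hx)
    have : x ≠ n := by rintro rfl; exact h hx
    omega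

theorem ML_succ (n : ℕ) : (ML (n + 3)).card + (ML (n + 2)).card = (SL (n + 2)).card := by
  classical
  have h1 : (ML (n + 2)) = (SL (n + 2)).filter (fun l => l.getLast? = some (n + 1)) := by
    ext l
    rw [Finset.mem_filter, mem_SL, mem_ML]
    constructor
    · rintro ⟨h, y, rfl⟩
      exact ⟨⟨h, _, rfl⟩, by simp [List.getLast?_cons]⟩
    · rintro ⟨⟨h, y, rfl⟩, h2⟩
      refine ⟨h, ?_⟩
      have := (mem_KL.1 h).1
      rcases List.eq_nil_or_concat y with rfl | ⟨y', a, rfl⟩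
      · simp at this
      · refine ⟨y', ?_⟩
        simp [List.getLast?_cons] at h2
        simp [h2]
  have h2 : (ML (n + 3)).card
      = ((SL (n + 2)).filter (fun l => ¬ l.getLast? = some (n + 1))).card := by
    symm
    apply Finset.card_bij (fun l _ => l ++ [n + 2])
    · intro l hl
      rw [Finset.mem_filter, mem_SL] at hl
      obtain ⟨⟨h, y, rfl⟩, h2⟩ := hl
      exact concat_mem_ML.2 ⟨h, h2⟩
    · intro a _ b _ h
      exact List.append_cancel_right h
    · intro l hl
      obtain ⟨h, y, rfl⟩ := mem_ML.1 hl
      have := concat_mem_ML.1 hl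
      refine ⟨0 :: y, ?_, rfl⟩
      rw [Finset.mem_filter, mem_SL]
      exact ⟨⟨this.1, _, rfl⟩, this.2⟩
  rw [h2, h1, add_comm]
  exact Finset.card_filter_add_card_filter_not _

noncomputable def gfA : PowerSeries (Polynomial ℚ) :=
  PowerSeries.mk fun n => ((KL n).card : Polynomial ℚ)
noncomputable def gfS : PowerSeries (Polynomial ℚ) :=
  PowerSeries.mk fun n => ((SL n).card : Polynomial ℚ)
noncomputable def gfM : PowerSeries (Polynomial ℚ) :=
  PowerSeries.mk fun n => ((ML n).card : Polynomial ℚ)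
noncomputable def gfE : PowerSeries (Polynomial ℚ) :=
  PowerSeries.mk fun n => ∑ l ∈ KL n, (Polynomial.X : Polynomial ℚ) ^ (occS l).card

theorem gfS_eq : (1 + T) * gfS = T * gfA := by
  ext1 n
  rw [add_mul, one_mul, map_add]
  cases n with
  | zero => simp [T, gfS, gfA, SL_zero]
  | succ n =>
    simp only [T, PowerSeries.coeff_succ_X_mul, gfS, gfA, PowerSeries.coeff_mk]
    rw [← SL_succ n]; push_cast; ring

theorem gfM_eq : (1 + T) * gfM = T * gfS - T ^ 2 := by
  ext1 n
  rw [add_mul, one_mul, map_add, map_sub]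
  match n with
  | 0 => simp [T, gfS, gfM, ML_small]
  | 1 =>
    rw [T, show (1:ℕ) = 0 + 1 from rfl, PowerSeries.coeff_succ_X_mul, PowerSeries.coeff_succ_X_mul,
      PowerSeries.coeff_X_pow]
    simp [gfS, gfM, ML_small, SL_zero]
  | 2 =>
    rw [T, show (2:ℕ) = 1 + 1 from rfl, PowerSeries.coeff_succ_X_mul, PowerSeries.coeff_succ_X_mul,
      PowerSeries.coeff_X_pow]
    simp [gfS, gfM, ML_small, SL_one]
  | n + 3 =>
    rw [T, show n + 3 = (n + 2) + 1 from rfl, PowerSeries.coeff_succ_X_mul,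
      PowerSeries.coeff_succ_X_mul, PowerSeries.coeff_X_pow, if_neg (by omega)]
    simp only [gfS, gfM, PowerSeries.coeff_mk]
    rw [← ML_succ n]; push_cast; ring

theorem gfE_eq : gfE = gfA + (U - 1) * (gfA * (gfM * gfE)) := by
  ext1 n
  have hU : (U - 1) = PowerSeries.C (R := Polynomial ℚ) (Polynomial.X - 1) := by
    simp [U]
  rw [hU, map_add, PowerSeries.coeff_C_mul, PowerSeries.coeff_mul]
  simp only [PowerSeries.coeff_mul, gfE, gfA, gfM, PowerSeries.coeff_mk]
  rw [← main_sum, Finset.mul_sum]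
  rw [Finset.sum_congr rfl (fun l _ => pow_card_aux (Polynomial.X : Polynomial ℚ) (occS l))]
  rw [Finset.sum_add_distrib]
  simp

theorem gf_final : ((1 + T) ^ 2 + T ^ 2 * (1 - U) * gfA * (gfA - 1 - T)) * gfE
      = (1 + T) ^ 2 * gfA := by
  have hM : (1 + T) ^ 2 * gfM = T ^ 2 * (gfA - 1 - T) := by
    linear_combination (1 + T) * gfM_eq + T * gfS_eq
  linear_combination (1 + T) ^ 2 * gfE_eq + (U - 1) * gfA * gfE * hM
def toL {n : ℕ} (σ : Equiv.Perm (Fin n)) : List ℕ := List.ofFn (fun i => (σ i : ℕ))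

@[simp] theorem toL_length {n : ℕ} (σ : Equiv.Perm (Fin n)) : (toL σ).length = n := by simp [toL]

theorem toL_IsP {n : ℕ} (σ : Equiv.Perm (Fin n)) : IsP (toL σ) := by
  constructor
  · apply List.nodup_ofFn.2
    intro a b h
    exact σ.injective (Fin.ext h)
  · intro x hx
    rw [toL_length]
    simp only [toL, List.mem_ofFn] at hx
    obtain ⟨i, rfl⟩ := hx
    exact (σ i).2

theorem toL_Kg {n : ℕ} (σ : Equiv.Perm (Fin n)) : Kg (toL σ) ↔ IsKing σ := by
  unfold Kg toL IsKing
  rw [List.isChain_ofFn]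
  constructor
  · intro h i hi
    have := h i hi
    rw [lt_abs]
    have e : (⟨(i:ℕ), Nat.lt_of_succ_lt hi⟩ : Fin n) = i := rfl
    rw [e] at this
    omega
  · intro h i hi
    have := h ⟨i, by omega⟩ hi
    rw [lt_abs] at this
    dsimp only at this
    omega

open Classical in
theorem trans_sum {n : ℕ} (f : List ℕ → Polynomial ℚ) :
    (∑ σ : Equiv.Perm (Fin n), if IsKing σ then f (toL σ) else 0) = ∑ l ∈ KL n, f l := by
  rw [← Finset.sum_filter]
  apply Finset.sum_bij (fun σ _ => toL σ)
  · intro σ hσ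
    rw [mem_KL]
    exact ⟨toL_length σ, toL_IsP σ, (toL_Kg σ).2 (by simpa using hσ)⟩
  · intro σ _ τ _ h
    ext i
    exact congrFun (List.ofFn_injective h) i
  · intro l hl
    rw [mem_KL] at hl
    obtain ⟨rfl, hP, hK⟩ := hl
    let g : Fin l.length → Fin l.length := fun i => ⟨l[i], hP.2 _ (List.getElem_mem _)⟩
    have hg : Function.Injective g := by
      intro a b h
      have : l[(a:ℕ)] = l[(b:ℕ)] := by simpa [g] using h
      exact Fin.ext ((hP.1.getElem_inj_iff).1 this)
    let σ : Equiv.Perm (Fin l.length) := Equiv.ofBijective g (Finite.injective_iff_bijective.1 hg)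
    have e : toL σ = l := by
      apply List.ext_getElem
      · simp
      · intro i h1 h2
        simp [toL, σ, g]
    refine ⟨σ, ?_, e⟩
    simp only [Finset.mem_filter, Finset.mem_univ, true_and]
    rw [← toL_Kg, e]; exact hK
  · intros; rfl

theorem list_split (l : List ℕ) (i j : ℕ) (hij : i < j) (hj : j < l.length) :
    l = l.take i ++ (l[i] :: ((l.drop (i + 1)).take (j - i - 1) ++ l[j] :: l.drop (j + 1))) := by
  rw [List.getElem_cons_drop]
  have : (l.drop (i+1)).drop (j - i - 1) = l.drop j := by
    rw [List.drop_drop]; congr 1; omega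
  rw [← this, List.take_append_drop, List.getElem_cons_drop, List.take_append_drop]

theorem Occ_toL {n : ℕ} (σ : Equiv.Perm (Fin n)) (b : ℕ) :
    Occ (toL σ) b ↔ ∃ i j, OccP σ i j ∧ n - 1 - j = b := by
  have hget : ∀ k (hk : k < (toL σ).length), (toL σ)[k] = (σ ⟨k, by simpa using hk⟩ : ℕ) := by
    intro k hk; simp [toL]
  constructor
  · rintro ⟨x, c, y, d, z, he, h1, h2, h3, h4, h5⟩
    have hn : n = x.length + (y.length + (z.length + 1) + 1) := by
      have := congrArg List.length he
      simpa using this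
    have hg : ∀ k (hk : k < n), (toL σ)[k]? = some (σ ⟨k, hk⟩ : ℕ) := by
      intro k hk
      rw [List.getElem?_eq_getElem (by simpa using hk), hget]
    rw [he] at hg
    have gx : ∀ k (hk : k < n), k < x.length → (σ ⟨k, hk⟩ : ℕ) ∈ x := by
      intro k hk hkx
      have := hg k hk
      rw [List.getElem?_append_left hkx] at this
      exact List.mem_of_getElem? this
    have gc : ∀ hk : x.length < n, (σ ⟨x.length, hk⟩ : ℕ) = c := by
      intro hk
      have := hg _ hk
      simpa using this.symm
    have gy : ∀ k (hk : k < n), x.length < k → k < x.length + 1 + y.length →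
        (σ ⟨k, hk⟩ : ℕ) ∈ y := by
      intro k hk h1 h2
      have := hg k hk
      obtain ⟨m, rfl⟩ : ∃ m, k = x.length + (m + 1) := ⟨k - x.length - 1, by omega⟩
      rw [List.getElem?_append_right (by omega), Nat.add_sub_cancel_left, List.getElem?_cons_succ,
        List.getElem?_append_left (by omega)] at this
      exact List.mem_of_getElem? this
    have gd : ∀ hk : x.length + 1 + y.length < n, (σ ⟨x.length + 1 + y.length, hk⟩ : ℕ) = d := by
      intro hk
      have := hg _ hk
      rw [List.getElem?_append_right (by omega),
        show x.length + 1 + y.length - x.length = y.length + 1 by omega, List.getElem?_cons_succ,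
        List.getElem?_append_right (by omega)] at this
      simpa using this.symm
    have gz : ∀ k (hk : k < n), x.length + 1 + y.length < k → (σ ⟨k, hk⟩ : ℕ) ∈ z := by
      intro k hk h1
      have := hg k hk
      obtain ⟨m, rfl⟩ : ∃ m, k = x.length + (y.length + (m + 1) + 1) :=
        ⟨k - x.length - 1 - y.length - 1, by omega⟩
      rw [List.getElem?_append_right (by omega), Nat.add_sub_cancel_left, List.getElem?_cons_succ,
        List.getElem?_append_right (by omega), Nat.add_sub_cancel_left, 
        List.getElem?_cons_succ] at this
      exact List.mem_of_getElem? this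
    have hi : x.length < n := by omega
    have hj : x.length + 1 + y.length < n := by omega
    refine ⟨⟨x.length, hi⟩, ⟨x.length + 1 + y.length, hj⟩, ⟨?_, ?_, ?_, ?_, ?_⟩, ?_⟩
    · simp only [Fin.mk_lt_mk]; omega
    · rw [Fin.lt_def, gc, gd]; exact h1
    · intro k hk
      rw [Fin.lt_def, gd]
      exact h2 _ (gx k k.2 hk)
    · intro k hk1 hk2
      rw [Fin.lt_def, Fin.lt_def, gc, gd]
      exact h3 _ (gy k k.2 hk1 hk2)
    · intro k hk
      rw [Fin.lt_def, gc]
      exact h4 _ (gz k k.2 hk)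
    · simp only; omega
  · rintro ⟨i, j, ⟨h1, h2, h3, h4, h5⟩, rfl⟩
    have hj : (j : ℕ) < (toL σ).length := by simp
    have hi : (i : ℕ) < (toL σ).length := by simp
    refine ⟨_, _, _, _, _, list_split (toL σ) i j h1 hj, ?_, ?_, ?_, ?_, ?_⟩
    · rw [hget, hget]; exact h2
    · intro u hu
      obtain ⟨k, hk, rfl⟩ := List.mem_take_iff_getElem.1 hu
      rw [hget, hget]
      exact h3 _ (by rw [Fin.lt_def]; simp only; omega)
    · intro u hu
      obtain ⟨k, hk, rfl⟩ := List.mem_take_iff_getElem.1 hu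
      rw [List.getElem_drop, hget, hget, hget]
      exact h4 _ (by rw [Fin.lt_def]; simp only; omega) (by rw [Fin.lt_def]; simp only; omega)
    · intro u hu
      obtain ⟨k, hk, rfl⟩ := List.mem_drop_iff_getElem.1 hu
      rw [hget, hget]
      exact h5 _ (by rw [Fin.lt_def]; simp only; omega)
    · simp; omega

theorem OccP_inj {n : ℕ} {σ : Equiv.Perm (Fin n)} {i i' j : Fin n} (h : OccP σ i j)
    (h' : OccP σ i' j) : i = i' := by
  rcases lt_trichotomy i i' with hlt | heq | hlt
  · have a := h'.2.2.1 i hlt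
    exact absurd a (not_lt.2 h.2.1.le)
  · exact heq
  · have a := h.2.2.1 i' hlt
    exact absurd a (not_lt.2 h'.2.1.le)

theorem occP_eq {n : ℕ} (σ : Equiv.Perm (Fin n)) : occP σ = (occS (toL σ)).card := by
  classical
  unfold occP
  rw [Nat.card_eq_fintype_card, Fintype.card_subtype]
  apply Finset.card_bij (fun p _ => n - 1 - (p.2 : ℕ))
  · rintro ⟨i, j⟩ h
    rw [mem_occS, Occ_toL]
    exact ⟨i, j, by simpa using h, rfl⟩
  · rintro ⟨i, j⟩ h ⟨i', j'⟩ h' he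
    simp only [Finset.mem_filter, Finset.mem_univ, true_and] at h h'
    have : j = j' := by ext; simp only at he; omega
    subst this
    rw [OccP_inj h h']
  · intro b hb
    rw [mem_occS, Occ_toL] at hb
    obtain ⟨i, j, h, rfl⟩ := hb
    exact ⟨(i, j), by simpa using h, rfl⟩

theorem kingAu_eq : kingAu = gfA := by
  classical
  unfold kingAu gfA
  congr 1
  ext1 n
  have := trans_sum (n := n) (fun _ => 1)
  rw [kingCount, Nat.card_eq_fintype_card, Fintype.card_subtype]
  rw [Finset.sum_boole] at this
  simpa using this

theorem Etu_eq : Etu = gfE := by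
  classical
  unfold Etu gfE
  congr 1
  ext1 n
  rw [← trans_sum (n := n) (fun l => (Polynomial.X : Polynomial ℚ) ^ (occS l).card)]
  apply Finset.sum_congr rfl
  intro σ _
  rw [occP_eq]

theorem statement_15 :
    ((1 + T) ^ 2 + T ^ 2 * (1 - U) * kingAu * (kingAu - 1 - T)) * Etu
      = (1 + T) ^ 2 * kingAu := by
  rw [kingAu_eq, Etu_eq]
  exact gf_final
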